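/- Let (a_1,…,a_N) be a finite sequence of positive integers with N odd, a_1=1, and a_k=a_{N+1−k} for all k, and let G=AT(a_1,…,a_N) be the associated symmetrical antitree, of diameter L=N−1. Then G is Bonnet-Myers sharp if and only if every radial edge x∼y of G satisfies κ_LLY(x,y)=2/L. -/

import Mathlib

open scoped Classical
open Finset

noncomputable section

/-- The degree of a vertex `x` in the graph `G`. -/
def deg {V : Type*} [Fintype V] (G : SimpleGraph V) (x : V) : ℕ :=
  (Finset.univ.filter (fun y => G.Adj x y)).card

/-- The diameter of `G`: the maximum of the combinatorial distance over all pairs of vertices. -/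
def diam {V : Type*} [Fintype V] (G : SimpleGraph V) : ℕ :=
  Finset.univ.sup (fun xy : V × V => G.dist xy.1 xy.2)

/-- The probability measure `μ_x^p` of the lazy simple random walk at `x` with idleness `p`. -/
def mu {V : Type*} [Fintype V] (G : SimpleGraph V) (p : ℝ) (x : V) : V → ℝ :=
  fun z => if z = x then p else if G.Adj x z then (1 - p) / (deg G x : ℝ) else 0

/-- The Wasserstein distance `W₁(μ₁, μ₂)` with respect to the combinatorial distance of `G`:
the infimum of the total transport cost over all transport plans from `μ₁` to `μ₂`. -/
def W1 {V : Type*} [Fintype V] (G : SimpleGraph V) (μ₁ μ₂ : V → ℝ) : ℝ :=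
  sInf {c : ℝ | ∃ π : V → V → ℝ,
    (∀ x y, 0 ≤ π x y ∧ π x y ≤ 1) ∧
    (∀ x, ∑ y, π x y = μ₁ x) ∧
    (∀ y, ∑ x, π x y = μ₂ y) ∧
    c = ∑ x, ∑ y, (G.dist x y : ℝ) * π x y}

/-- The `p`-Ollivier-Ricci curvature `κ_p(x,y) = 1 - W₁(μ_x^p, μ_y^p)`. -/
def kappa {V : Type*} [Fintype V] (G : SimpleGraph V) (p : ℝ) (x y : V) : ℝ :=
  1 - W1 G (mu G p x) (mu G p y)

/-- The Lin-Lu-Yau curvature `κ_LLY(x,y) = lim_{p→1} κ_p(x,y)/(1-p)`. -/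
def kappaLLY {V : Type*} [Fintype V] (G : SimpleGraph V) (x y : V) : ℝ :=
  Filter.limUnder (nhdsWithin 1 (Set.Iio 1)) (fun p => kappa G p x y / (1 - p))

/-- `G` is Bonnet-Myers sharp if the infimum of `κ_LLY` over the edges equals `2/diam(G)`. -/
def BMSharp {V : Type*} [Fintype V] (G : SimpleGraph V) : Prop :=
  sInf {r : ℝ | ∃ x y, G.Adj x y ∧ r = kappaLLY G x y} = 2 / (diam G : ℝ)

/-- `G` is obtained from the complete graph on its vertex set by deleting a matching
(a set of pairwise disjoint edges, encoded as a symmetric irreflexive relation in which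
every vertex has at most one partner). -/
def IsMatchingDeletionOfComplete {V : Type*} (G : SimpleGraph V) : Prop :=
  ∃ M : V → V → Prop, Symmetric M ∧ (∀ x, ¬ M x x) ∧
    (∀ x y z, M x y → M x z → y = z) ∧
    (∀ x y, G.Adj x y ↔ x ≠ y ∧ ¬ M x y)

/-- The graph `G(a,b)` on `2a+b` vertices `u_1, …, u_{2a}, v_1, …, v_b` (encoded as
`Fin (2a+b)`, with `u_i` the index `i-1` and `v_j` the index `2a+j-1`), in which two distinct
vertices are adjacent unless they form a pair `{u_{2i-1}, u_{2i}}`, i.e. `G(a,b)` is the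
complete graph `K_{2a+b}` with a matching of size `a` deleted. -/
def Gab (a b : ℕ) : SimpleGraph (Fin (2*a+b)) where
  Adj x y := x ≠ y ∧ ¬((x : ℕ) < 2*a ∧ (y : ℕ) < 2*a ∧ (x : ℕ)/2 = (y : ℕ)/2)
  symm := by
    constructor
    intro x y h
    exact ⟨h.1.symm, fun hc => h.2 ⟨hc.2.1, hc.1, hc.2.2.symm⟩⟩
  loopless := by constructor; intro x h; exact h.1 rfl

/-- The antitree `AT(a_1, …, a_N)` on the disjoint union of sets `V_1, …, V_N` with
`|V_k| = a_k` (0-indexed here: `V_k` is `Fin (a k)` for `k : Fin N`): two distinct vertices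
are adjacent iff they lie in the same set or in consecutive sets. -/
def antitree (N : ℕ) (a : Fin N → ℕ) : SimpleGraph (Σ k : Fin N, Fin (a k)) where
  Adj x y := x ≠ y ∧
    ((x.1 : ℕ) = (y.1 : ℕ) ∨ (x.1 : ℕ) + 1 = (y.1 : ℕ) ∨ (y.1 : ℕ) + 1 = (x.1 : ℕ))
  symm := by
    constructor
    intro x y h
    refine ⟨h.1.symm, ?_⟩
    rcases h.2 with h2 | h2 | h2
    · exact Or.inl h2.symm
    · exact Or.inr (Or.inr h2)
    · exact Or.inr (Or.inl h2)
  loopless := by constructor; intro x h; exact h.1 rfl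

/-!
For a function `f` that is `1`-Lipschitz for the graph distance, Kantorovich duality bounds the
curvature of an edge `x ∼ y` with `f y - f x = 1` by `Δf x - Δf y`, where `Δ` is the random walk
Laplacian. Along a geodesic from `u` to `v` these bounds telescope for `f = d(u, ·)`, and
`|Δf| ≤ 1`, so the curvatures of its edges add up to at most `2`. If moreover every curvature is at
least `2 / diam` and the geodesic has length `diam`, then all of these curvatures are equal
to `2 / diam`.

In an antitree of diameter `N - 1` every radial edge lies on a geodesic from the first to the last
layer. Conversely, the endpoints of a spherical edge have the same closed neighbourhood, so the two
walk measures coincide for a suitable idleness and the curvature exceeds `1`, which is at least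
`2 / (N - 1)` unless `N = 2`. In that case a spherical edge would create triangles over radial edges
of curvature `2`, and an edge of a triangle has curvature less than `2`.
-/

section Lipschitz

variable {V : Type*} {G : SimpleGraph V} {f : V → ℝ} {x y : V}

/-- `f` is `1`-Lipschitz for the graph distance; exchanging `u` and `v` gives the bound on
`|f v - f u|`. -/
def IsOneLipschitz (G : SimpleGraph V) (f : V → ℝ) : Prop :=
  ∀ u v, f v - f u ≤ G.dist u v

lemma isOneLipschitz_dist (hG : G.Connected) (u : V) :
    IsOneLipschitz G (fun v => (G.dist u v : ℝ)) := fun v w => by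
  beta_reduce
  rw [sub_le_iff_le_add']
  exact_mod_cast hG.dist_triangle

lemma IsOneLipschitz.sub_le_one (hf : IsOneLipschitz G f) (h : G.Adj x y) : f y - f x ≤ 1 := by
  simpa [SimpleGraph.dist_eq_one_iff_adj.mpr h] using hf x y

lemma IsOneLipschitz.sub_le_length (hf : IsOneLipschitz G f) (p : G.Walk x y) :
    f y - f x ≤ p.length :=
  (hf x y).trans (by exact_mod_cast G.dist_le p)

lemma IsOneLipschitz.neg (hf : IsOneLipschitz G f) : IsOneLipschitz G (-f) := fun u v => by
  have := hf v u
  rw [G.dist_comm] at this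
  simp only [Pi.neg_apply]
  linarith

end Lipschitz

section Transport

variable {V : Type*} [Fintype V] {G : SimpleGraph V} {μ ν μ' ν' : V → ℝ} {π π' : V → V → ℝ}

/-- `π` is a transport plan (coupling) from `μ` to `ν`. The bound `π ≤ 1` in the definition of `W1`
is omitted because it is automatic for probability measures. -/
structure IsTransportPlan (π : V → V → ℝ) (μ ν : V → ℝ) : Prop where
  nonneg : ∀ x y, 0 ≤ π x y
  sum_right : ∀ x, ∑ y, π x y = μ x
  sum_left : ∀ y, ∑ x, π x y = ν y

/-- The cost of the transport plan `π` for the graph distance, which `W1` minimizes. -/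
def transportCost (G : SimpleGraph V) (π : V → V → ℝ) : ℝ :=
  ∑ x, ∑ y, (G.dist x y : ℝ) * π x y

lemma IsTransportPlan.le_one (hπ : IsTransportPlan π μ ν) (hμ : μ ∈ stdSimplex ℝ V) (x y : V) :
    π x y ≤ 1 :=
  calc π x y ≤ ∑ z, π x z := single_le_sum (fun z _ => hπ.nonneg x z) (mem_univ y)
    _ = μ x := hπ.sum_right x
    _ ≤ 1 := (mem_Icc_of_mem_stdSimplex hμ x).2

lemma isTransportPlan_mul (hμ : μ ∈ stdSimplex ℝ V) (hν : ν ∈ stdSimplex ℝ V) :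
    IsTransportPlan (fun x y => μ x * ν y) μ ν where
  nonneg x y := mul_nonneg (hμ.1 x) (hν.1 y)
  sum_right x := by rw [← mul_sum, hν.2, mul_one]
  sum_left y := by rw [← sum_mul, hμ.2, one_mul]

lemma IsTransportPlan.smul_add_smul (hπ : IsTransportPlan π μ ν) (hπ' : IsTransportPlan π' μ' ν')
    {s t : ℝ} (hs : 0 ≤ s) (ht : 0 ≤ t) :
    IsTransportPlan (s • π + t • π') (s • μ + t • μ') (s • ν + t • ν') where
  nonneg x y := add_nonneg (mul_nonneg hs (hπ.nonneg x y)) (mul_nonneg ht (hπ'.nonneg x y))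
  sum_right x := by
    simp [sum_add_distrib, ← mul_sum, hπ.sum_right, hπ'.sum_right]
  sum_left y := by
    simp [sum_add_distrib, ← mul_sum, hπ.sum_left, hπ'.sum_left]

lemma transportCost_smul_add_smul (G : SimpleGraph V) (π π' : V → V → ℝ) (s t : ℝ) :
    transportCost G (s • π + t • π') = s * transportCost G π + t * transportCost G π' := by
  simp [transportCost, mul_add, sum_add_distrib, mul_sum, mul_left_comm]

lemma W1_le_transportCost (G : SimpleGraph V) (hμ : μ ∈ stdSimplex ℝ V)
    (hπ : IsTransportPlan π μ ν) : W1 G μ ν ≤ transportCost G π := by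
  refine csInf_le ⟨0, ?_⟩
    ⟨π, fun x y => ⟨hπ.nonneg x y, hπ.le_one hμ x y⟩, hπ.sum_right, hπ.sum_left, rfl⟩
  rintro c ⟨ρ, hρ, -, -, rfl⟩
  exact sum_nonneg fun x _ => sum_nonneg fun y _ => mul_nonneg (Nat.cast_nonneg _) (hρ x y).1

lemma exists_transportCost_lt (hμ : μ ∈ stdSimplex ℝ V) (hν : ν ∈ stdSimplex ℝ V) {c : ℝ}
    (hc : W1 G μ ν < c) : ∃ π, IsTransportPlan π μ ν ∧ transportCost G π < c := by
  have hprod := isTransportPlan_mul hμ hν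
  obtain ⟨_, ⟨π, hπ, hright, hleft, rfl⟩, hlt⟩ := exists_lt_of_csInf_lt (by
    exact ⟨_, _, fun x y => ⟨hprod.nonneg x y, hprod.le_one hμ x y⟩,
      hprod.sum_right, hprod.sum_left, rfl⟩) hc
  exact ⟨π, ⟨fun x y => (hπ x y).1, hright, hleft⟩, hlt⟩

lemma W1_comm (G : SimpleGraph V) (μ ν : V → ℝ) : W1 G μ ν = W1 G ν μ := by
  unfold W1
  congr 1
  ext c
  constructor <;>
  · rintro ⟨π, hπ, hright, hleft, rfl⟩
    refine ⟨fun x y => π y x, fun x y => hπ y x, hleft, hright, ?_⟩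
    rw [sum_comm]
    simp only [SimpleGraph.dist_comm]

lemma W1_self_nonpos (G : SimpleGraph V) (hμ : μ ∈ stdSimplex ℝ V) : W1 G μ μ ≤ 0 := by
  have hdiag : IsTransportPlan (fun x y => if x = y then μ x else 0) μ μ :=
    ⟨fun x y => by split_ifs <;> simp [hμ.1 x], by simp, by simp⟩
  refine (W1_le_transportCost G hμ hdiag).trans_eq ?_
  simp [transportCost]

lemma convexOn_W1 (G : SimpleGraph V) :
    ConvexOn ℝ (stdSimplex ℝ V ×ˢ stdSimplex ℝ V) (fun m : (V → ℝ) × (V → ℝ) => W1 G m.1 m.2) := by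
  refine ⟨(convex_stdSimplex ℝ V).prod (convex_stdSimplex ℝ V), ?_⟩
  rintro ⟨μ, ν⟩ ⟨hμ, hν⟩ ⟨μ', ν'⟩ ⟨hμ', hν'⟩ s t hs ht hst
  refine le_of_forall_pos_le_add fun ε hε => ?_
  obtain ⟨π, hπ, hcost⟩ := exists_transportCost_lt hμ hν (lt_add_of_pos_right (W1 G μ ν) hε)
  obtain ⟨π', hπ', hcost'⟩ :=
    exists_transportCost_lt hμ' hν' (lt_add_of_pos_right (W1 G μ' ν') hε)
  calc W1 G (s • μ + t • μ') (s • ν + t • ν')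
      ≤ transportCost G (s • π + t • π') :=
        W1_le_transportCost G (convex_stdSimplex ℝ V hμ hμ' hs ht hst) (hπ.smul_add_smul hπ' hs ht)
    _ = s * transportCost G π + t * transportCost G π' := transportCost_smul_add_smul G π π' s t
    _ ≤ s * (W1 G μ ν + ε) + t * (W1 G μ' ν' + ε) := by gcongr
    _ = s * W1 G μ ν + t * W1 G μ' ν' + ε := by linear_combination ε * hst

lemma IsOneLipschitz.sum_sub_sum_le_W1 {f : V → ℝ} (hf : IsOneLipschitz G f)
    (hμ : μ ∈ stdSimplex ℝ V) (hν : ν ∈ stdSimplex ℝ V) :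
    ∑ z, f z * ν z - ∑ z, f z * μ z ≤ W1 G μ ν := by
  refine le_of_forall_gt fun c hc => ?_
  obtain ⟨π, hπ, hcost⟩ := exists_transportCost_lt hμ hν hc
  refine lt_of_le_of_lt ?_ hcost
  have hν_sum : ∑ z, f z * ν z = ∑ x, ∑ y, f y * π x y := by
    rw [sum_comm]
    simp only [← mul_sum, hπ.sum_left]
  have hμ_sum : ∑ z, f z * μ z = ∑ x, ∑ y, f x * π x y := by
    simp only [← mul_sum, hπ.sum_right]
  rw [hν_sum, hμ_sum]
  simp only [← sum_sub_distrib, ← sub_mul]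
  exact sum_le_sum fun x _ => sum_le_sum fun y _ =>
    mul_le_mul_of_nonneg_right (hf x y) (hπ.nonneg x y)

lemma W1_single (hG : G.Connected) (x y : V) :
    W1 G (Pi.single x 1) (Pi.single y 1) = G.dist x y := by
  have hx := single_mem_stdSimplex ℝ x
  have hy := single_mem_stdSimplex ℝ y
  apply le_antisymm
  · refine (W1_le_transportCost G hx (isTransportPlan_mul hx hy)).trans_eq ?_
    simp [transportCost, Pi.single_apply]
  · simpa [Pi.single_apply] using (isOneLipschitz_dist hG x).sum_sub_sum_le_W1 hx hy

end Transport

section RandomWalk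

variable {V : Type*} [Fintype V] {G : SimpleGraph V} {f : V → ℝ} {x y : V} {p : ℝ}

/-- The (negative semidefinite) Laplacian of the simple random walk on `G`; it vanishes at isolated
vertices. -/
def walkLaplacian (G : SimpleGraph V) (f : V → ℝ) (x : V) : ℝ :=
  (∑ z with G.Adj x z, (f z - f x)) / deg G x

lemma deg_pos (h : G.Adj x y) : 0 < deg G x :=
  card_pos.mpr ⟨y, by simpa using h⟩

lemma IsOneLipschitz.walkLaplacian_le_one (hf : IsOneLipschitz G f) (x : V) :
    walkLaplacian G f x ≤ 1 := by
  refine div_le_one_of_le₀ ?_ (Nat.cast_nonneg _)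
  have := sum_le_card_nsmul ({z | G.Adj x z} : Finset V) (fun z => f z - f x) 1
    fun z hz => hf.sub_le_one (by simpa using hz)
  simpa [deg] using this

lemma walkLaplacian_neg (G : SimpleGraph V) (f : V → ℝ) (x : V) :
    walkLaplacian G (-f) x = -walkLaplacian G f x := by
  rw [walkLaplacian, walkLaplacian, ← neg_div, ← sum_neg_distrib]
  congr 2 with z
  simp only [Pi.neg_apply]
  ring

lemma IsOneLipschitz.neg_one_le_walkLaplacian (hf : IsOneLipschitz G f) (x : V) :
    -1 ≤ walkLaplacian G f x := by
  have := hf.neg.walkLaplacian_le_one x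
  rw [walkLaplacian_neg] at this
  linarith

lemma IsOneLipschitz.neg_one_lt_walkLaplacian (hf : IsOneLipschitz G f) (h : G.Adj x y)
    (hxy : f x - f y < 1) : -1 < walkLaplacian G f x := by
  have hdeg : (0 : ℝ) < deg G x := by exact_mod_cast deg_pos h
  rw [walkLaplacian, lt_div_iff₀ hdeg]
  have hlt : ∑ z with G.Adj x z, (-1 : ℝ) < ∑ z with G.Adj x z, (f z - f x) := by
    refine sum_lt_sum (fun z hz => ?_) ⟨y, by simpa using h, by linarith⟩
    have := hf.sub_le_one (SimpleGraph.Adj.symm (by simpa using hz : G.Adj x z))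
    linarith
  simpa [deg] using hlt

lemma sum_mul_mu (h : G.Adj x y) (f : V → ℝ) (p : ℝ) :
    ∑ z, f z * mu G p x z = f x + (1 - p) * walkLaplacian G f x := by
  have hdeg : (deg G x : ℝ) ≠ 0 := by exact_mod_cast (deg_pos h).ne'
  have hmu : ∀ z, f z * mu G p x z =
      (if z = x then f z * p else 0) + if G.Adj x z then f z * ((1 - p) / deg G x) else 0 := by
    intro z
    unfold mu
    split_ifs with hzx hxz
    · exact absurd (hzx ▸ hxz) G.irrefl
    all_goals ring
  have hLap : walkLaplacian G f x = (∑ z with G.Adj x z, f z) / deg G x - f x := by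
    rw [walkLaplacian, sum_sub_distrib, sum_const, nsmul_eq_mul, sub_div, ← deg,
      mul_div_cancel_left₀ _ hdeg]
  simp only [hmu, sum_add_distrib, sum_ite_eq', mem_univ, if_true, ← sum_filter, ← sum_mul, hLap]
  ring

lemma mu_mem_stdSimplex (h : G.Adj x y) (hp : p ∈ Set.Icc 0 1) : mu G p x ∈ stdSimplex ℝ V := by
  constructor
  · intro z
    have : 0 ≤ (1 - p) / (deg G x : ℝ) := div_nonneg (by linarith [hp.2]) (Nat.cast_nonneg _)
    unfold mu
    split_ifs <;> linarith [hp.1]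
  · simpa [walkLaplacian] using sum_mul_mu h (fun _ => 1) p

lemma mu_one (G : SimpleGraph V) (x : V) : mu G 1 x = Pi.single x 1 := by
  ext z
  simp [mu, Pi.single_apply]

lemma mu_eq_lineMap (G : SimpleGraph V) (p : ℝ) (x : V) :
    mu G p x = AffineMap.lineMap (mu G 0 x) (mu G 1 x) p := by
  ext z
  simp only [mu, AffineMap.lineMap_apply_module, Pi.add_apply, Pi.smul_apply, smul_eq_mul]
  split_ifs <;> ring

lemma mu_inv_deg_add_one (h : G.Adj x y) :
    mu G (1 / (deg G x + 1)) x =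
      fun z => if z = x ∨ G.Adj x z then (1 / (deg G x + 1) : ℝ) else 0 := by
  have hdeg : (0 : ℝ) < deg G x := by exact_mod_cast deg_pos h
  have hstep : (1 - 1 / (deg G x + 1)) / (deg G x : ℝ) = 1 / (deg G x + 1) := by
    field_simp
    ring
  ext z
  rw [mu, hstep, ite_or]

end RandomWalk

section Curvature

variable {V : Type*} [Fintype V] {G : SimpleGraph V} {f : V → ℝ} {x y z : V} {p : ℝ}

lemma kappaLLY_comm (G : SimpleGraph V) (x y : V) : kappaLLY G x y = kappaLLY G y x := by
  simp only [kappaLLY, kappa, W1_comm G (mu G _ x)]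

lemma convexOn_W1_mu (h : G.Adj x y) :
    ConvexOn ℝ (Set.Icc 0 1) (fun p => W1 G (mu G p x) (mu G p y)) := by
  let line : ℝ →ᵃ[ℝ] (V → ℝ) × (V → ℝ) :=
    AffineMap.lineMap (mu G 0 x, mu G 0 y) (mu G 1 x, mu G 1 y)
  have hline : ∀ p, line p = (mu G p x, mu G p y) := fun p => by
    rw [mu_eq_lineMap G p x, mu_eq_lineMap G p y]
    rfl
  refine (((convexOn_W1 G).comp_affineMap line).subset (fun p hp => ?_)
    (convex_Icc 0 1)).congr fun p _ => ?_
  · rw [Set.mem_preimage, hline]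
    exact ⟨mu_mem_stdSimplex h hp, mu_mem_stdSimplex h.symm hp⟩
  · rw [Function.comp_apply, hline]

lemma kappa_div_eq_slope (hG : G.Connected) (h : G.Adj x y) (p : ℝ) :
    kappa G p x y / (1 - p) = slope (fun q => W1 G (mu G q x) (mu G q y)) 1 p := by
  rw [slope_def_field, mu_one, mu_one, W1_single hG, SimpleGraph.dist_eq_one_iff_adj.mpr h,
    Nat.cast_one, kappa, ← neg_div_neg_eq, neg_sub, neg_sub]

lemma monotoneOn_kappa_div (hG : G.Connected) (h : G.Adj x y) :
    MonotoneOn (fun p => kappa G p x y / (1 - p)) (Set.Ico 0 1) := by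
  simp only [kappa_div_eq_slope hG h]
  exact ((convexOn_W1_mu h).slope_mono (Set.right_mem_Icc.mpr zero_le_one)).mono
    fun p hp => ⟨Set.Ico_subset_Icc_self hp, hp.2.ne⟩

lemma IsOneLipschitz.kappa_div_le (hf : IsOneLipschitz G f) (h : G.Adj x y) (hxy : f y - f x = 1)
    (hp : p ∈ Set.Ico 0 1) :
    kappa G p x y / (1 - p) ≤ walkLaplacian G f x - walkLaplacian G f y := by
  have hp' := Set.Ico_subset_Icc_self hp
  have hW := hf.sum_sub_sum_le_W1 (mu_mem_stdSimplex h hp') (mu_mem_stdSimplex h.symm hp')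
  rw [sum_mul_mu h, sum_mul_mu h.symm] at hW
  rw [div_le_iff₀ (sub_pos.mpr hp.2), kappa]
  linear_combination hW - hxy

lemma tendsto_kappa_div (hG : G.Connected) (h : G.Adj x y) :
    Filter.Tendsto (fun p => kappa G p x y / (1 - p)) (nhdsWithin 1 (Set.Iio 1))
      (nhds (kappaLLY G x y)) := by
  have hbdd : BddAbove ((fun p => kappa G p x y / (1 - p)) '' Set.Ioo 0 1) := by
    refine ⟨walkLaplacian G (G.dist x ·) x - walkLaplacian G (G.dist x ·) y, ?_⟩
    rintro _ ⟨p, hp, rfl⟩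
    exact (isOneLipschitz_dist hG x).kappa_div_le h
      (by simp [SimpleGraph.dist_eq_one_iff_adj.mpr h]) (Set.Ioo_subset_Ico_self hp)
  exact tendsto_nhds_limUnder ⟨_, MonotoneOn.tendsto_nhdsWithin_Ioo_left
    (Set.nonempty_Ioo.mpr zero_lt_one)
    ((monotoneOn_kappa_div hG h).mono Set.Ioo_subset_Ico_self) hbdd⟩

lemma IsOneLipschitz.kappaLLY_le (hf : IsOneLipschitz G f) (hG : G.Connected) (h : G.Adj x y)
    (hxy : f y - f x = 1) : kappaLLY G x y ≤ walkLaplacian G f x - walkLaplacian G f y :=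
  le_of_tendsto (tendsto_kappa_div hG h) <|
    Filter.eventually_of_mem (Ico_mem_nhdsLT zero_lt_one) fun _ hp => hf.kappa_div_le h hxy hp

lemma kappa_div_le_kappaLLY (hG : G.Connected) (h : G.Adj x y) (hp : p ∈ Set.Ico 0 1) :
    kappa G p x y / (1 - p) ≤ kappaLLY G x y :=
  ge_of_tendsto (tendsto_kappa_div hG h) <|
    Filter.eventually_of_mem (Ico_mem_nhdsLT hp.2) fun _ hq =>
      monotoneOn_kappa_div hG h hp ⟨hp.1.trans hq.1, hq.2⟩ hq.1

lemma kappaLLY_lt_two_of_triangle (hG : G.Connected) (hxy : G.Adj x y) (hxz : G.Adj x z)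
    (hyz : G.Adj y z) : kappaLLY G x y < 2 := by
  have hf := isOneLipschitz_dist hG x
  have hdist_y := SimpleGraph.dist_eq_one_iff_adj.mpr hxy
  have hdist_z := SimpleGraph.dist_eq_one_iff_adj.mpr hxz
  have hkappa := hf.kappaLLY_le hG hxy (by simp [hdist_y])
  have hx := hf.walkLaplacian_le_one x
  have hy := hf.neg_one_lt_walkLaplacian hyz (by simp [hdist_y, hdist_z])
  linarith

lemma deg_eq_of_closed_nbhd_eq (h : ∀ z, z = x ∨ G.Adj x z ↔ z = y ∨ G.Adj y z) :
    deg G x = deg G y := by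
  have hins : insert x ({z | G.Adj x z} : Finset V) = insert y ({z | G.Adj y z} : Finset V) := by
    ext z
    simpa using h z
  have hcard := congrArg card hins
  rw [card_insert_of_notMem (by simp), card_insert_of_notMem (by simp)] at hcard
  exact Nat.succ_injective hcard

lemma one_add_inv_deg_le_kappaLLY (hG : G.Connected) (hxy : G.Adj x y)
    (h : ∀ z, z = x ∨ G.Adj x z ↔ z = y ∨ G.Adj y z) :
    1 + 1 / (deg G x : ℝ) ≤ kappaLLY G x y := by
  have hdeg : (0 : ℝ) < deg G x := by exact_mod_cast deg_pos hxy
  set q : ℝ := 1 / (deg G x + 1) with hq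
  have hq_mem : q ∈ Set.Ico 0 1 :=
    ⟨by positivity, by rw [hq, div_lt_one (by positivity)]; linarith⟩
  have hmu : mu G q x = mu G q y := by
    rw [hq, mu_inv_deg_add_one hxy, deg_eq_of_closed_nbhd_eq h, mu_inv_deg_add_one hxy.symm]
    simp only [h]
  have hkappa : 1 ≤ kappa G q x y := by
    have := W1_self_nonpos G (mu_mem_stdSimplex hxy.symm (Set.Ico_subset_Icc_self hq_mem))
    rw [kappa, hmu]
    linarith
  have hq_compl : 1 - q = deg G x / (deg G x + 1) := by
    rw [hq]
    field_simp
    ring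
  calc 1 + 1 / (deg G x : ℝ) = 1 / (1 - q) := by rw [hq_compl]; field_simp
    _ ≤ kappa G q x y / (1 - q) := by have := sub_pos.mpr hq_mem.2; gcongr
    _ ≤ kappaLLY G x y := kappa_div_le_kappaLLY hG hxy hq_mem

end Curvature

section BonnetMyers

variable {V : Type*} [Fintype V] {G : SimpleGraph V} {f : V → ℝ} {u v x y : V} {K : ℝ}

lemma dist_le_diam (G : SimpleGraph V) (x y : V) : G.dist x y ≤ diam G :=
  le_sup (f := fun xy : V × V => G.dist xy.1 xy.2) (mem_univ (x, y))

lemma IsOneLipschitz.mul_length_le_walkLaplacian_sub (hf : IsOneLipschitz G f) (hG : G.Connected)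
    (hK : ∀ x y, G.Adj x y → K ≤ kappaLLY G x y) (p : G.Walk x y) (hp : f y - f x = p.length) :
    K * p.length ≤ walkLaplacian G f x - walkLaplacian G f y := by
  induction p with
  | nil => simp
  | cons h p ih =>
    rw [SimpleGraph.Walk.length_cons, Nat.cast_add_one] at hp ⊢
    have hstep := hf.sub_le_one h
    have hrest := hf.sub_le_length p
    have hkappa := (hK _ _ h).trans (hf.kappaLLY_le hG h (by linarith))
    linarith [ih (by linarith)]

lemma kappaLLY_add_mul_le_two (hG : G.Connected) (hK : ∀ x y, G.Adj x y → K ≤ kappaLLY G x y)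
    (p : G.Walk u x) (h : G.Adj x y) (q : G.Walk y v)
    (hlen : p.length + 1 + q.length = G.dist u v) :
    kappaLLY G x y + K * (p.length + q.length) ≤ 2 := by
  have hf := isOneLipschitz_dist hG u
  have hlen' : (p.length : ℝ) + 1 + q.length = G.dist u v := by exact_mod_cast hlen
  have hself : (G.dist u u : ℝ) = 0 := by simp
  have hp := hf.sub_le_length p
  have hxy := hf.sub_le_one h
  have hq := hf.sub_le_length q
  have hp_bound := hf.mul_length_le_walkLaplacian_sub hG hK p (by linarith)
  have hxy_bound := hf.kappaLLY_le hG h (by linarith)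
  have hq_bound := hf.mul_length_le_walkLaplacian_sub hG hK q (by linarith)
  linarith [hf.walkLaplacian_le_one u, hf.neg_one_le_walkLaplacian v]

lemma BMSharp.le_kappaLLY (hs : BMSharp G) (h : G.Adj x y) :
    2 / (diam G : ℝ) ≤ kappaLLY G x y := by
  rw [← show _ = 2 / (diam G : ℝ) from hs]
  refine csInf_le (Set.Finite.bddBelow ?_) ⟨x, y, h, rfl⟩
  refine (Set.finite_range fun e : V × V => kappaLLY G e.1 e.2).subset ?_
  rintro _ ⟨x, y, -, rfl⟩
  exact ⟨(x, y), rfl⟩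

lemma BMSharp.kappaLLY_eq_of_geodesic (hs : BMSharp G) (hG : G.Connected)
    (p : G.Walk u x) (h : G.Adj x y) (q : G.Walk y v)
    (hlen : p.length + 1 + q.length = G.dist u v) (hdiam : G.dist u v = diam G) :
    kappaLLY G x y = 2 / (diam G : ℝ) := by
  refine le_antisymm ?_ (hs.le_kappaLLY h)
  have hsum : (p.length : ℝ) + 1 + q.length = diam G := by exact_mod_cast hlen.trans hdiam
  have hpos : (0 : ℝ) < diam G := by rw [← hsum]; positivity
  have hle := kappaLLY_add_mul_le_two hG (fun _ _ => hs.le_kappaLLY) p h q hlen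
  have hcancel : 2 / (diam G : ℝ) * (p.length + 1 + q.length) = 2 := by
    rw [hsum, div_mul_cancel₀ _ hpos.ne']
  linarith

lemma bmSharp_of_kappaLLY_eq (h : G.Adj x y) (hxy : kappaLLY G x y = 2 / (diam G : ℝ))
    (hle : ∀ u v, G.Adj u v → 2 / (diam G : ℝ) ≤ kappaLLY G u v) : BMSharp G := by
  refine IsLeast.csInf_eq ⟨⟨x, y, h, hxy.symm⟩, ?_⟩
  rintro _ ⟨u, v, huv, rfl⟩
  exact hle u v huv

-- Both sides of the defining equation are junk: the infimum of the empty set and `2 / 0`.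
lemma bmSharp_of_diam_eq_zero (h : diam G = 0) : BMSharp G := by
  have hempty : {r : ℝ | ∃ x y, G.Adj x y ∧ r = kappaLLY G x y} = ∅ := by
    refine Set.eq_empty_of_forall_notMem ?_
    rintro _ ⟨x, y, hxy, -⟩
    have := dist_le_diam G x y
    rw [SimpleGraph.dist_eq_one_iff_adj.mpr hxy] at this
    omega
  rw [BMSharp, hempty, h]
  simp

end BonnetMyers

section Antitree

variable {N : ℕ} {a : Fin N → ℕ} {x y z : Σ k : Fin N, Fin (a k)}

lemma antitree_adj_of_succ_eq (h : (x.1 : ℕ) + 1 = y.1) : (antitree N a).Adj x y :=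
  ⟨by rintro rfl; omega, Or.inr (Or.inl h)⟩

lemma fst_le_fst_add_length (p : (antitree N a).Walk x y) : (y.1 : ℕ) ≤ x.1 + p.length := by
  induction p with
  | nil => simp
  | cons h p ih =>
    have := h.2
    rw [SimpleGraph.Walk.length_cons]
    omega

lemma exists_section_through (hpos : ∀ k, 0 < a k) {i j : Fin N} (hij : i ≠ j) (u : Fin (a i))
    (v : Fin (a j)) : ∃ s : ∀ k, Fin (a k), s i = u ∧ s j = v :=
  ⟨Function.update (Function.update (fun k => ⟨0, hpos k⟩) i u) j v,
    by rw [Function.update_of_ne hij, Function.update_self], Function.update_self _ _ _⟩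

lemma exists_walk_section (s : ∀ k, Fin (a k)) {i j : Fin N} (hij : i ≤ j) :
    ∃ p : (antitree N a).Walk ⟨i, s i⟩ ⟨j, s j⟩, p.length = (j : ℕ) - i := by
  obtain ⟨n, hn⟩ : ∃ n, (i : ℕ) + n = j := Nat.exists_eq_add_of_le hij |>.imp fun _ => Eq.symm
  induction n generalizing j with
  | zero =>
    obtain rfl : i = j := Fin.ext hn
    exact ⟨.nil, by simp⟩
  | succ n ih =>
    obtain ⟨p, hp⟩ := ih (j := ⟨i + n, by omega⟩) (Fin.le_def.mpr (by simp)) rfl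
    refine ⟨p.concat (antitree_adj_of_succ_eq hn), ?_⟩
    rw [SimpleGraph.Walk.length_concat, hp]
    simp only
    omega

lemma dist_section (s : ∀ k, Fin (a k)) {i j : Fin N} (hij : i ≤ j) :
    (antitree N a).dist ⟨i, s i⟩ ⟨j, s j⟩ = (j : ℕ) - i := by
  obtain ⟨p, hp⟩ := exists_walk_section s hij
  obtain ⟨q, hq⟩ := p.reachable.exists_walk_length_eq_dist
  have hle := SimpleGraph.dist_le p
  have hge := fst_le_fst_add_length q
  simp only at hge
  omega

lemma antitree_connected (hN : 0 < N) (hpos : ∀ k, 0 < a k) : (antitree N a).Connected := by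
  have : Nonempty (Σ k : Fin N, Fin (a k)) := ⟨⟨⟨0, hN⟩, ⟨0, hpos _⟩⟩⟩
  refine ⟨fun ⟨i, u⟩ ⟨j, v⟩ => ?_⟩
  rcases eq_or_ne i j with rfl | hij
  · rcases eq_or_ne u v with rfl | huv
    · exact .rfl
    · exact SimpleGraph.Adj.reachable ⟨by simpa using huv, Or.inl rfl⟩
  · obtain ⟨s, rfl, rfl⟩ := exists_section_through hpos hij u v
    rcases le_total i j with hle | hle
    · exact (exists_walk_section s hle).choose.reachable
    · exact (exists_walk_section s hle).choose.reachable.symm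

lemma dist_antitree_le (hpos : ∀ k, 0 < a k) (hN : 2 ≤ N) (x y : Σ k : Fin N, Fin (a k)) :
    (antitree N a).dist x y ≤ N - 1 := by
  obtain ⟨i, u⟩ := x
  obtain ⟨j, v⟩ := y
  rcases eq_or_ne i j with rfl | hij
  · rcases eq_or_ne u v with rfl | huv
    · simp
    · have hadj : (antitree N a).Adj ⟨i, u⟩ ⟨i, v⟩ := ⟨by simpa using huv, Or.inl rfl⟩
      rw [SimpleGraph.dist_eq_one_iff_adj.mpr hadj]
      omega
  · obtain ⟨s, rfl, rfl⟩ := exists_section_through hpos hij u v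
    rcases le_total i j with hle | hle
    · rw [dist_section s hle]
      omega
    · rw [SimpleGraph.dist_comm, dist_section s hle]
      omega

lemma eq_of_fst_eq (hxy : x.1 = y.1) (hx : a x.1 = 1) : x = y := by
  obtain ⟨i, u⟩ := x
  obtain ⟨j, v⟩ := y
  obtain rfl : i = j := hxy
  have : Subsingleton (Fin (a i)) := Fin.subsingleton_iff_le_one.mpr hx.le
  rw [Subsingleton.elim u v]

lemma diam_antitree_add_one (hN : 0 < N) (hpos : ∀ k, 0 < a k) (h1 : a ⟨0, hN⟩ = 1) :
    diam (antitree N a) + 1 = N := by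
  have hge : N - 1 ≤ diam (antitree N a) := by
    have hdist := dist_section (i := ⟨0, hN⟩) (j := ⟨N - 1, by omega⟩)
      (fun k => (⟨0, hpos k⟩ : Fin (a k))) (Fin.le_def.mpr (Nat.zero_le _))
    exact hdist.ge.trans (dist_le_diam _ _ _)
  have hle : diam (antitree N a) ≤ N - 1 := by
    refine Finset.sup_le fun ⟨x, y⟩ _ => ?_
    rcases (show N = 1 ∨ 2 ≤ N by omega) with rfl | hN2
    · have hx : x.1 = ⟨0, hN⟩ := Subsingleton.elim _ _
      simp [eq_of_fst_eq (x := x) (y := y) (Subsingleton.elim _ _) (hx ▸ h1)]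
    · exact dist_antitree_le hpos hN2 x y
  omega

lemma BMSharp.kappaLLY_antitree_eq (hs : BMSharp (antitree N a)) (hpos : ∀ k, 0 < a k)
    (hdiam : diam (antitree N a) + 1 = N) (hxy : (x.1 : ℕ) + 1 = y.1) :
    kappaLLY (antitree N a) x y = 2 / (diam (antitree N a) : ℝ) := by
  have hN : 0 < N := by omega
  obtain ⟨i, u⟩ := x
  obtain ⟨j, v⟩ := y
  have hij : (i : ℕ) + 1 = j := hxy
  obtain ⟨s, rfl, rfl⟩ := exists_section_through hpos (by omega) u v
  have hfirst : ⟨0, hN⟩ ≤ i := Fin.le_def.mpr (Nat.zero_le _)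
  have hlast : j ≤ ⟨N - 1, by omega⟩ := Fin.le_def.mpr (Nat.le_sub_one_of_lt j.2)
  obtain ⟨p, hp⟩ := exists_walk_section s hfirst
  obtain ⟨q, hq⟩ := exists_walk_section s hlast
  have hdist := dist_section s (hfirst.trans ((Fin.le_def.mpr (by omega)).trans hlast))
  refine hs.kappaLLY_eq_of_geodesic (antitree_connected hN hpos) p
    (antitree_adj_of_succ_eq hxy) q ?_ ?_
  · simp only at hp hq hdist
    omega
  · simp only at hdist
    omega

lemma exists_fst_ne (hN : 2 ≤ N) (hpos : ∀ k, 0 < a k) (x : Σ k : Fin N, Fin (a k)) :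
    ∃ z : Σ k : Fin N, Fin (a k), z.1 ≠ x.1 := by
  have : Nontrivial (Fin N) := Fin.nontrivial_iff_two_le.mpr hN
  obtain ⟨k, hk⟩ := exists_ne x.1
  exact ⟨⟨k, ⟨0, hpos k⟩⟩, hk⟩

lemma eq_or_antitree_adj_iff : y = x ∨ (antitree N a).Adj x y ↔
    (x.1 : ℕ) = y.1 ∨ (x.1 : ℕ) + 1 = y.1 ∨ (y.1 : ℕ) + 1 = x.1 := by
  rcases eq_or_ne y x with rfl | hne
  · simp
  · simp [antitree, hne, hne.symm]

lemma one_le_kappaLLY_of_fst_eq (hG : (antitree N a).Connected) (h : (antitree N a).Adj x y)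
    (hxy : x.1 = y.1) : 1 ≤ kappaLLY (antitree N a) x y := by
  refine le_trans ?_ (one_add_inv_deg_le_kappaLLY hG h fun z => ?_)
  · rw [le_add_iff_nonneg_right]
    positivity
  · rw [eq_or_antitree_adj_iff, eq_or_antitree_adj_iff, hxy]

lemma kappaLLY_lt_two_of_fst_eq (hG : (antitree N a).Connected) (h : (antitree N a).Adj x y)
    (hxy : x.1 = y.1) (hxz : (antitree N a).Adj x z) (hne : z.1 ≠ x.1) :
    kappaLLY (antitree N a) x z < 2 := by
  refine kappaLLY_lt_two_of_triangle hG hxz h (SimpleGraph.Adj.symm ⟨?_, hxy ▸ hxz.2⟩)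
  rintro rfl
  exact hne hxy.symm

lemma two_div_diam_le_kappaLLY_of_fst_eq (hpos : ∀ k, 0 < a k)
    (hdiam : diam (antitree N a) + 1 = N)
    (hrad : ∀ x y, (antitree N a).Adj x y → x.1 ≠ y.1 →
      kappaLLY (antitree N a) x y = 2 / (diam (antitree N a) : ℝ))
    (h : (antitree N a).Adj x y) (hxy : x.1 = y.1) :
    2 / (diam (antitree N a) : ℝ) ≤ kappaLLY (antitree N a) x y := by
  have hG := antitree_connected (by omega) hpos
  have hdist := dist_le_diam (antitree N a) x y
  rw [SimpleGraph.dist_eq_one_iff_adj.mpr h] at hdist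
  rcases hdist.eq_or_lt with hdiam1 | hdiam2
  · obtain ⟨z, hz⟩ := exists_fst_ne (by omega) hpos x
    have hxz : (antitree N a).Adj x z := ⟨fun e => hz (congrArg Sigma.fst e.symm), by omega⟩
    have hlt := kappaLLY_lt_two_of_fst_eq hG h hxy hxz hz
    rw [hrad x z hxz hz.symm, ← hdiam1] at hlt
    norm_num at hlt
  · refine le_trans ?_ (one_le_kappaLLY_of_fst_eq hG h hxy)
    exact div_le_one_of_le₀ (by exact_mod_cast hdiam2) (Nat.cast_nonneg _)

lemma bmSharp_antitree_of_kappaLLY_eq (hpos : ∀ k, 0 < a k) (hdiam : diam (antitree N a) + 1 = N)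
    (hrad : ∀ x y, (antitree N a).Adj x y → x.1 ≠ y.1 →
      kappaLLY (antitree N a) x y = 2 / (diam (antitree N a) : ℝ)) :
    BMSharp (antitree N a) := by
  rcases Nat.eq_zero_or_pos (diam (antitree N a)) with hzero | hdiam_pos
  · exact bmSharp_of_diam_eq_zero hzero
  let x : Σ k : Fin N, Fin (a k) := ⟨⟨0, by omega⟩, ⟨0, hpos _⟩⟩
  let y : Σ k : Fin N, Fin (a k) := ⟨⟨1, by omega⟩, ⟨0, hpos _⟩⟩
  have hadj : (antitree N a).Adj x y := antitree_adj_of_succ_eq rfl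
  refine bmSharp_of_kappaLLY_eq hadj (hrad x y hadj (by simp [x, y])) fun u v huv => ?_
  rcases eq_or_ne u.1 v.1 with hfst | hfst
  · exact two_div_diam_le_kappaLLY_of_fst_eq hpos hdiam hrad huv hfst
  · exact (hrad u v huv hfst).ge

end Antitree

theorem stmt11_general (N : ℕ) (a : Fin N → ℕ) (hpos : ∀ k, 0 < a k)
    (hdiam : diam (antitree N a) + 1 = N) :
    BMSharp (antitree N a) ↔
      ∀ x y : Σ k : Fin N, Fin (a k), (antitree N a).Adj x y → x.1 ≠ y.1 →
        kappaLLY (antitree N a) x y = 2 / ((N : ℝ) - 1) := by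
  have hL : (N : ℝ) - 1 = diam (antitree N a) := by
    rw [sub_eq_iff_eq_add]
    exact_mod_cast hdiam.symm
  rw [hL]
  refine ⟨fun hs x y h hne => ?_, bmSharp_antitree_of_kappaLLY_eq hpos hdiam⟩
  rcases h.2 with hfst | hup | hdown
  · exact absurd (Fin.ext hfst) hne
  · exact hs.kappaLLY_antitree_eq hpos hdiam hup
  · rw [kappaLLY_comm]
    exact hs.kappaLLY_antitree_eq hpos hdiam hdown

/-- A symmetrical antitree `AT(a_1, …, a_N)` with `N` odd and `a_1 = 1`
(of diameter `L = N - 1`) is Bonnet-Myers sharp iff every radial edge has `κ_LLY = 2/L`. -/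
theorem stmt11 (N : ℕ) (hN : Odd N) (a : Fin N → ℕ) (hpos : ∀ k, 0 < a k)
    (h1 : a ⟨0, hN.pos⟩ = 1) (hsym : ∀ k : Fin N, a k = a k.rev) :
    BMSharp (antitree N a) ↔
      ∀ x y : Σ k : Fin N, Fin (a k), (antitree N a).Adj x y → x.1 ≠ y.1 →
        kappaLLY (antitree N a) x y = 2 / ((N : ℝ) - 1) :=
  stmt11_general N a hpos (diam_antitree_add_one hN.pos hpos h1)
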